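/- arXiv:1908.09420 — 2 statements merged into one kernel-verified Lean document; each statement's English description precedes it below -/
import Mathlib

section
/- There are no odd primes p, q, r such that p·r divides q² + q + 1, q divides p² + p + 1, p divides r + 1, and r ≡ 1 (mod 4). -/
/-- Vieta jumping: if `x * y` divides `x² + y² + x + y + 1`, the quotient is `5`. -/
theorem quotient_eq_five (k : ℤ) (n : ℕ) : ∀ x y : ℤ, 0 < x → x ≤ y → y ≤ n →
    x ^ 2 + y ^ 2 + x + y + 1 = k * x * y → k = 5 := by
  induction n with
  | zero => intro x y hx hxy hy; push_cast at hy; omega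
  | succ n ih =>
    intro x y hx hxy hy h
    push_cast at hy
    rcases hxy.eq_or_lt with rfl | hlt
    · have hdvd : x ∣ 1 := ⟨k * x - 2 * x - 2, by linear_combination h⟩
      have hx1 : x = 1 := Int.eq_one_of_dvd_one hx.le hdvd
      subst hx1
      linarith
    · have hprod : y * (k * x - 1 - y) = x ^ 2 + x + 1 := by linear_combination -h
      have hpos : 0 < k * x - 1 - y := by
        by_contra! hneg
        nlinarith
      have hle : k * x - 1 - y ≤ x := by
        by_contra! hgt
        nlinarith
      exact ih (k * x - 1 - y) x hpos hle (by linarith) (by linear_combination h)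

/-- Coprime positive integers with `y ∣ x² + x + 1` and `x ∣ y² + y + 1` lie on the conic
`x² + y² + x + y + 1 = 5xy`. -/
theorem conic_of_dvd {x y : ℤ} (hx : 0 < x) (hy : 0 < y) (hxy : IsCoprime x y)
    (hyx : y ∣ x ^ 2 + x + 1) (hxy' : x ∣ y ^ 2 + y + 1) :
    x ^ 2 + y ^ 2 + x + y + 1 = 5 * x * y := by
  have h₁ : x ∣ x ^ 2 + y ^ 2 + x + y + 1 := by
    rw [show x ^ 2 + y ^ 2 + x + y + 1 = y ^ 2 + y + 1 + x * (x + 1) by ring]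
    exact dvd_add hxy' (dvd_mul_right x _)
  have h₂ : y ∣ x ^ 2 + y ^ 2 + x + y + 1 := by
    rw [show x ^ 2 + y ^ 2 + x + y + 1 = x ^ 2 + x + 1 + y * (y + 1) by ring]
    exact dvd_add hyx (dvd_mul_right y _)
  obtain ⟨k, hk⟩ := hxy.mul_dvd h₁ h₂
  have hk5 : k = 5 := by
    rcases le_total x y with h | h
    · exact quotient_eq_five k y.toNat x y hx h (by omega) (by linear_combination hk)
    · exact quotient_eq_five k x.toNat y x hy h (by omega) (by linear_combination hk)
  subst hk5
  linear_combination hk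

theorem not_dvd_sq_add_self_add_one {n : ℕ} (hn : ∀ x : ZMod n, x ^ 2 + x + 1 ≠ 0) (x : ℤ) :
    ¬ (n : ℤ) ∣ x ^ 2 + x + 1 := by
  intro h
  have h0 := (ZMod.intCast_zmod_eq_zero_iff_dvd _ n).2 h
  push_cast at h0
  exact hn x h0

theorem eq_of_dvd_sq_add_self_add_one {m x : ℤ} (hpos : 0 < m) (hle : m ≤ 12)
    (h : m ∣ x ^ 2 + x + 1) : m = 1 ∨ m = 3 ∨ m = 7 := by
  have h2 : ¬ 2 ∣ m := fun hd =>
    not_dvd_sq_add_self_add_one (n := 2) (by decide) x (hd.trans h)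
  have h5 : ¬ 5 ∣ m := fun hd =>
    not_dvd_sq_add_self_add_one (n := 5) (by decide) x (hd.trans h)
  have h9 : ¬ 9 ∣ m := fun hd =>
    not_dvd_sq_add_self_add_one (n := 9) (by decide) x (hd.trans h)
  have h11 : ¬ 11 ∣ m := fun hd =>
    not_dvd_sq_add_self_add_one (n := 11) (by decide) x (hd.trans h)
  interval_cases m <;> omega

/-- If `p < q` lie on the conic and are odd, the next term `5q - 1 - p` has no odd divisor
`r ≡ -1 (mod p)`. -/
theorem no_divisor_of_lt {p q r m s : ℤ} (hp : 3 ≤ p) (hpq : p < q)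
    (hpodd : p % 2 = 1) (hrodd : r % 2 = 1)
    (hconic : p ^ 2 + q ^ 2 + p + q + 1 = 5 * p * q) (hr : 0 < r)
    (hm : 5 * q - 1 - p = r * m) (hs : r + 1 = p * s) : False := by
  have hprod : p * (r * m) = q ^ 2 + q + 1 := by rw [← hm]; linear_combination -hconic
  obtain ⟨y, hy⟩ : ∃ y, y = 5 * p - 1 - q := ⟨_, rfl⟩
  have hq : q = 5 * p - 1 - y := by omega
  have hqy : q * y = p ^ 2 + p + 1 := by rw [hy]; linear_combination -hconic
  have hypos : 0 < y := by
    by_contra! h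
    nlinarith
  have hyp : y < p := by
    by_contra! h
    nlinarith
  have hconic' : p ^ 2 + y ^ 2 + p + y + 1 = 5 * p * y := by
    rw [hq] at hconic; linear_combination hconic
  have hs2 : 2 ≤ s := by
    have hs0 : 0 < s := by
      by_contra! h
      nlinarith
    have hs1 : s ≠ 1 := by rintro rfl; omega
    omega
  have hr2 : 2 * p - 1 ≤ r := by nlinarith
  have hm' : 24 * p - 6 - 5 * y = r * m := by rw [← hm, hq]; ring
  have hmpos : 0 < m := by
    by_contra! h
    nlinarith
  have hm12 : m ≤ 12 := by
    by_contra! h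
    nlinarith
  have hmdvd : m ∣ q ^ 2 + q + 1 := ⟨p * r, by linear_combination -hprod⟩
  have hdvd : p ∣ 5 * y + 6 - m := ⟨24 - s * m, by linear_combination -hm' - m * hs⟩
  have hz : p * (5 * y - 1 - p) = y ^ 2 + y + 1 := by linear_combination -hconic'
  have hzpos : 0 < 5 * y - 1 - p := by
    by_contra! h
    nlinarith
  have hzp : 5 * y - 1 - p < p := by
    by_contra! h
    nlinarith
  have hcases := eq_of_dvd_sq_add_self_add_one hmpos hm12 hmdvd
  have hsmall (hlow : 2 * p ≤ 5 * y + 5) : p = 3 ∨ p = 5 := by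
    have hp7 : p < 7 := by
      by_contra! h
      nlinarith [mul_nonneg (sub_nonneg.2 hlow) (by omega : 0 ≤ p - 1 - y)]
    omega
  clear hprod hm hm' hmdvd hs
  have hm7 : m = 7 := by
    by_contra hne
    have hlow : 2 * p ≤ 5 * y + 5 := by
      obtain ⟨c, hc⟩ := hdvd
      have hc2 : 2 ≤ c := by
        by_contra! h
        have : p * c ≤ p * 1 := by gcongr; omega
        omega
      have : p * 2 ≤ p * c := by gcongr
      omega
    rcases hsmall hlow with rfl | rfl
    · interval_cases y <;> omega
    · interval_cases y <;> omega
  subst hm7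
  have hdvd' : p ∣ 5 * y - 1 - p := by
    rw [show 5 * y - 1 - p = 5 * y + 6 - 7 - p by ring]
    exact dvd_sub hdvd (dvd_refl p)
  exact absurd (Int.le_of_dvd hzpos hdvd') (by omega)

/-- There are no odd primes p, q, r such that p·r ∣ q² + q + 1,
q ∣ p² + p + 1, p ∣ r + 1, and r ≡ 1 (mod 4). -/
theorem stmt_9 (p q r : ℕ) (hp : p.Prime) (hq : q.Prime) (hr : r.Prime)
    (hpodd : Odd p) (hqodd : Odd q) (hrodd : Odd r) :
    ¬ (p * r ∣ q ^ 2 + q + 1 ∧ q ∣ p ^ 2 + p + 1 ∧ p ∣ r + 1 ∧ r % 4 = 1) := by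
  rintro ⟨⟨m, hm⟩, hqp, ⟨s, hs⟩, -⟩
  have hne : p ≠ q := by
    rintro rfl
    have h1 : p ∣ 1 := (Nat.dvd_add_right (Dvd.intro (p + 1) (by ring) : p ∣ p ^ 2 + p)).1 hqp
    exact hp.one_lt.ne' (Nat.dvd_one.1 h1)
  have hp2 := hp.two_le
  have hpm := Nat.odd_iff.1 hpodd
  have hrm := Nat.odd_iff.1 hrodd
  zify at hm hs
  have hconic : (p : ℤ) ^ 2 + q ^ 2 + p + q + 1 = 5 * p * q := by
    refine conic_of_dvd (by exact_mod_cast hp.pos) (by exact_mod_cast hq.pos) ?_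
      (by exact_mod_cast hqp) ⟨r * m, by linear_combination hm⟩
    exact Nat.isCoprime_iff_coprime.2 ((Nat.coprime_primes hp hq).2 hne)
  have hnext : 5 * (q : ℤ) - 1 - p = r * m := by
    have hp0 : (p : ℤ) ≠ 0 := by exact_mod_cast hp.ne_zero
    apply mul_left_cancel₀ hp0
    linear_combination hm - hconic
  have hrpos : (0 : ℤ) < r := by exact_mod_cast hr.pos
  rcases hne.lt_or_gt with hlt | hgt
  · exact no_divisor_of_lt (by omega) (by exact_mod_cast hlt) (by omega) (by omega) hconic hrpos
      hnext hs
  · have hple : p ≤ r + 1 := Nat.le_of_dvd r.succ_pos ⟨s, by exact_mod_cast hs⟩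
    have hrp : p ≤ r := by omega
    have hm0 : (1 : ℤ) ≤ m := by
      have : m ≠ 0 := by
        rintro rfl
        push_cast at hm
        nlinarith
      omega
    have hgt' : (q : ℤ) + 1 ≤ p := by exact_mod_cast hgt
    have hrp' : (p : ℤ) ≤ r := by exact_mod_cast hrp
    have hpr : (p : ℤ) * p ≤ p * r * m := by
      calc (p : ℤ) * p ≤ p * r := by gcongr
        _ ≤ p * r * m := le_mul_of_one_le_right (by positivity) hm0
    nlinarith [hq.pos]
end

section
/- Let N be an odd perfect number with at least three distinct prime divisors, and let a, b, c denote respectively its third largest, second largest, and largest prime divisors. If p⁴ divides N for some prime p ∈ {a, b, c}, then abc < 2^(7/20) · 3^(13/60) · N^(17/30). -/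
open Finset

/-- The divisor sum of `p ^ k` is at most `3 / 2 * p ^ k` when `3 ≤ p`. -/
lemma two_mul_geom_sum_le {p : ℕ} (hp : 3 ≤ p) (k : ℕ) :
    2 * ∑ i ∈ range (k + 1), p ^ i ≤ 3 * p ^ k := by
  induction k with
  | zero => simp
  | succ k ih =>
    rw [sum_range_succ]
    have : 3 * p ^ k ≤ p ^ (k + 1) := by rw [pow_succ']; gcongr
    lia

lemma odd_geom_sum_iff {p : ℕ} (hp : Odd p) (k : ℕ) :
    Odd (∑ i ∈ range (k + 1), p ^ i) ↔ Even k := by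
  rw [odd_sum_iff_odd_card_odd, filter_true_of_mem (fun i _ => hp.pow), card_range,
    Nat.odd_add_one, Nat.not_odd_iff_even]

lemma Nat.Perfect.prod_geom_sum {N : ℕ} (h : Nat.Perfect N) :
    ∏ p ∈ N.primeFactors, ∑ i ∈ range (N.factorization p + 1), p ^ i = 2 * N := by
  rw [← (Nat.perfect_iff_sum_divisors_eq_two_mul h.2).1 h, Nat.sum_divisors h.2.ne']

lemma Nat.Perfect.geom_sum_dvd {N p : ℕ} (h : Nat.Perfect N) (hp : p ∈ N.primeFactors) :
    ∑ i ∈ range (N.factorization p + 1), p ^ i ∣ 2 * N := by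
  rw [← h.prod_geom_sum]
  exact dvd_prod_of_mem (fun p => ∑ i ∈ range (N.factorization p + 1), p ^ i) hp

lemma Nat.Perfect.even_factorization {N p q : ℕ} (h : Nat.Perfect N) (hN : Odd N)
    (hp : p ∈ N.primeFactors) (hq : q ∈ N.primeFactors) (hpq : p ≠ q)
    (hqo : Odd (N.factorization q)) : Even (N.factorization p) := by
  by_contra hpo
  have hop : Odd p := hN.of_dvd_nat (Nat.dvd_of_mem_primeFactors hp)
  have hoq : Odd q := hN.of_dvd_nat (Nat.dvd_of_mem_primeFactors hq)
  have h1 : 2 ∣ ∑ i ∈ range (N.factorization p + 1), p ^ i := by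
    rwa [← odd_geom_sum_iff hop, Nat.not_odd_iff_even, even_iff_two_dvd] at hpo
  have h2 : 2 ∣ ∑ i ∈ range (N.factorization q + 1), q ^ i := by
    rwa [← Nat.not_even_iff_odd, ← odd_geom_sum_iff hoq, Nat.not_odd_iff_even,
      even_iff_two_dvd] at hqo
  have h3 := prod_dvd_prod_of_subset {p, q} N.primeFactors
    (fun p => ∑ i ∈ range (N.factorization p + 1), p ^ i) (by simp [insert_subset_iff, hp, hq])
  rw [prod_pair hpq, h.prod_geom_sum] at h3
  have h4 : 2 * 2 ∣ 2 * N := (mul_dvd_mul h1 h2).trans h3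
  have h5 : 2 ∣ N := Nat.dvd_of_mul_dvd_mul_left two_pos h4
  rw [← even_iff_two_dvd] at h5
  exact (Nat.not_even_iff_odd.2 hN) h5

lemma Nat.Perfect.geom_sum_dvd_of_even {N p : ℕ} (h : Nat.Perfect N) (hN : Odd N)
    (hp : p ∈ N.primeFactors) (he : Even (N.factorization p)) :
    ∑ i ∈ range (N.factorization p + 1), p ^ i ∣ N := by
  have hop : Odd p := hN.of_dvd_nat (Nat.dvd_of_mem_primeFactors hp)
  exact Nat.Coprime.dvd_of_dvd_mul_left
    (Nat.coprime_two_right.2 ((odd_geom_sum_iff hop _).2 he)) (h.geom_sum_dvd hp)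

lemma Nat.Perfect.exists_dvd_geom_sum {N c : ℕ} (h : Nat.Perfect N) (hc : c ∈ N.primeFactors) :
    ∃ p ∈ N.primeFactors, c ∣ ∑ i ∈ range (N.factorization p + 1), p ^ i := by
  have hd : c ∣ 2 * N := (Nat.dvd_of_mem_primeFactors hc).mul_left 2
  rw [← h.prod_geom_sum] at hd
  exact ((Nat.prime_of_mem_primeFactors hc).prime.dvd_finsetProd_iff _).1 hd

/-- If `c * d = 1 + p + ⋯ + p ^ k` and `p ^ j ∣ c + 1` with `j ≤ k`, then `d` is at least
about `p ^ j`. -/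
lemma mul_pow_le_of_mul_eq_geom_sum {p c d j k : ℕ} (hp : 3 ≤ p) (hjk : j ≤ k)
    (hj : p ^ j ∣ c + 1) (hd : c * d = ∑ i ∈ range (k + 1), p ^ i) :
    c * p ^ j ≤ 3 * p ^ k := by
  have hp' : (3 : ℤ) ≤ p := by exact_mod_cast hp
  have hg : (c : ℤ) * d * (p - 1) = p ^ (k + 1) - 1 := by
    have h := geom_sum_mul (p : ℤ) (k + 1)
    rw [← h]
    congr 1
    exact_mod_cast hd
  have hd0 : 1 ≤ (d : ℤ) := by
    by_contra hlt
    have : d = 0 := by lia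
    subst this
    have : 1 < (p : ℤ) ^ (k + 1) := one_lt_pow₀ (by linarith) (by simp)
    simp at hg
    linarith
  have hdvd : (p : ℤ) ^ j ∣ d * (p - 1) - 1 := by
    have h1 : (p : ℤ) ^ j ∣ c + 1 := by exact_mod_cast hj
    have h2 : (p : ℤ) ^ j ∣ p ^ (k + 1) := pow_dvd_pow _ (by lia)
    have h3 : (d : ℤ) * (p - 1) - 1 = (c + 1) * (d * (p - 1)) - p ^ (k + 1) := by
      linear_combination -hg
    rw [h3]
    exact dvd_sub (h1.mul_right _) h2
  obtain ⟨m, hm⟩ := hdvd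
  have hpj : 0 < (p : ℤ) ^ j := by positivity
  have hm0 : 0 ≤ m := by
    have : 0 ≤ (p : ℤ) ^ j * m := by rw [← hm]; nlinarith
    exact nonneg_of_mul_nonneg_right this hpj
  have hm1 : (p : ℤ) - 1 ∣ m + 1 := by
    have h1 : (p : ℤ) - 1 ∣ p ^ j - 1 := sub_one_dvd_pow_sub_one _ _
    have h2 : m + 1 = d * (p - 1) - (p ^ j - 1) * m := by linear_combination -hm
    rw [h2]
    exact dvd_sub (dvd_mul_left _ _) (h1.mul_right _)
  have hm2 := Int.le_of_dvd (by linarith) hm1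
  have hm3 : (p : ℤ) * p ^ j ≤ 3 * (d * (p - 1)) := by nlinarith
  have hc0 : (0 : ℤ) ≤ c := by positivity
  have hm4 : (p : ℤ) * (c * p ^ j) ≤ p * (3 * p ^ k) := by
    have := mul_le_mul_of_nonneg_left hm3 hc0
    rw [pow_succ] at hg
    linarith
  exact_mod_cast le_of_mul_le_mul_left hm4 (by linarith)

lemma cube_le_six_mul {N p c : ℕ} (hN : Odd N) (hp : p.Prime) (hc : c.Prime) (hpc : p ≠ c)
    (hpN : p ∣ N) (hcN : c ∣ N) (hcN' : c + 1 ∣ 2 * N)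
    (hd : c ∣ ∑ i ∈ range (N.factorization p + 1), p ^ i) : c ^ 3 ≤ 6 * N := by
  have hop : Odd p := hN.of_dvd_nat hpN
  have hp3 : 3 ≤ p := by
    have := hp.two_le
    obtain ⟨t, rfl⟩ := hop
    lia
  obtain ⟨d, hd⟩ := hd
  obtain ⟨j, s, hs, hjs⟩ := Nat.exists_eq_pow_mul_and_not_dvd (n := c + 1) (by lia) p hp.ne_one
  have hs2 : 2 ∣ s := by
    have hoc : Odd c := hN.of_dvd_nat hcN
    have : 2 ∣ p ^ j * s := by rw [← hjs]; exact (hoc.add_odd odd_one).two_dvd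
    exact (Nat.coprime_two_left.2 hop.pow).dvd_of_dvd_mul_left this
  obtain ⟨t, rfl⟩ := hs2
  have hjk : j ≤ N.factorization p := by
    rw [← hp.pow_dvd_iff_le_factorization hN.pos.ne']
    refine (Nat.coprime_two_right.2 hop.pow).dvd_of_dvd_mul_left (dvd_trans ?_ hcN')
    exact hjs ▸ dvd_mul_right _ _
  have htN : t ∣ N := by
    have : 2 * t ∣ 2 * N := dvd_trans (hjs ▸ dvd_mul_left _ _) hcN'
    exact Nat.dvd_of_mul_dvd_mul_left two_pos this
  have hct : c.Coprime t := by
    have : c.Coprime (c + 1) := by simp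
    exact this.coprime_dvd_right (hjs ▸ (dvd_mul_left t 2).mul_left _)
  have hpt : p.Coprime t := (Nat.Prime.coprime_iff_not_dvd hp).2 fun h => hs (h.mul_left 2)
  have hle : c * p ^ N.factorization p * t ≤ N := by
    refine Nat.le_of_dvd hN.pos ?_
    refine Nat.Coprime.mul_dvd_of_dvd_of_dvd (hct.mul_left (hpt.pow_left _)) ?_ htN
    exact Nat.Coprime.mul_dvd_of_dvd_of_dvd
      (((Nat.coprime_primes hc hp).2 hpc.symm).pow_right _) hcN (Nat.ordProj_dvd N p)
  have hle' := mul_pow_le_of_mul_eq_geom_sum hp3 hjk ⟨_, hjs⟩ hd.symm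
  calc c ^ 3 ≤ c ^ 2 * (c + 1) := by rw [pow_succ]; gcongr; lia
    _ = 2 * c * t * (c * p ^ j) := by rw [hjs]; ring
    _ ≤ 2 * c * t * (3 * p ^ N.factorization p) := by gcongr
    _ = 6 * (c * p ^ N.factorization p * t) := by ring
    _ ≤ 6 * N := by gcongr

lemma log_monomial_le {a b c i j k m n N : ℕ} (ha : 0 < a) (hb : 0 < b) (hc : 0 < c)
    (hN : 0 < N) (h : a ^ i * b ^ j * c ^ k ≤ 2 ^ m * 3 ^ n * N) :
    i * Real.log a + j * Real.log b + k * Real.log c ≤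
      m * Real.log 2 + n * Real.log 3 + Real.log N := by
  have h' : (a : ℝ) ^ i * b ^ j * c ^ k ≤ 2 ^ m * 3 ^ n * N := by exact_mod_cast h
  have h'' := Real.log_le_log (by positivity) h'
  rwa [Real.log_mul (by positivity) (by positivity), Real.log_mul (by positivity) (by positivity),
    Real.log_mul (by positivity) (by positivity), Real.log_mul (by positivity) (by positivity),
    Real.log_pow, Real.log_pow, Real.log_pow, Real.log_pow, Real.log_pow] at h''

lemma add_one_div_two_dvd {N c : ℕ} (hN : Odd N) (hcN : c ∣ N) (h : c + 1 ∣ 2 * N) :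
    ∃ t, c + 1 = 2 * t ∧ t ∣ N ∧ c.Coprime t := by
  obtain ⟨t, ht⟩ := ((hN.of_dvd_nat hcN).add_odd odd_one).two_dvd
  refine ⟨t, ht, Nat.dvd_of_mul_dvd_mul_left two_pos (ht ▸ h), ?_⟩
  have : c.Coprime (c + 1) := by simp
  exact this.coprime_dvd_right (ht ▸ dvd_mul_left t 2)

lemma mul_dvd_of_coprime₃ {x y z N : ℕ} (hxy : x.Coprime y) (hxz : x.Coprime z)
    (hyz : y.Coprime z) (hx : x ∣ N) (hy : y ∣ N) (hz : z ∣ N) : x * y * z ∣ N :=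
  (hxz.mul_left hyz).mul_dvd_of_dvd_of_dvd (hxy.mul_dvd_of_dvd_of_dvd hx hy) hz

lemma three_mul_log_two_le : 3 * Real.log 2 ≤ 2 * Real.log 3 := by
  have := Real.log_le_log (by norm_num) (show (2 : ℝ) ^ 3 ≤ 3 ^ 2 by norm_num)
  simpa [Real.log_pow] using this

lemma five_mul_log_three_le : 5 * Real.log 3 ≤ 8 * Real.log 2 := by
  have := Real.log_le_log (by norm_num) (show (3 : ℝ) ^ 5 ≤ 2 ^ 8 by norm_num)
  simpa [Real.log_pow] using this

/-- Logarithmic form of the bound on the product of the three largest prime divisors. -/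
def LogBound (N a b c : ℕ) : Prop :=
  Real.log a + Real.log b + Real.log c <
    7 / 20 * Real.log 2 + 13 / 60 * Real.log 3 + 17 / 30 * Real.log N

lemma LogBound.mul_lt {N a b c : ℕ} (h : LogBound N a b c) (ha : 0 < a) (hb : 0 < b) (hc : 0 < c)
    (hN : 0 < N) :
    (a * b * c : ℝ) < (2 : ℝ) ^ ((7 : ℝ) / 20) * (3 : ℝ) ^ ((13 : ℝ) / 60) *
      (N : ℝ) ^ ((17 : ℝ) / 30) := by
  rw [← Real.log_lt_log_iff (by positivity) (by positivity),
    Real.log_mul (by positivity) (by positivity), Real.log_mul (by positivity) (by positivity),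
    Real.log_mul (by positivity) (by positivity), Real.log_mul (by positivity) (by positivity),
    Real.log_rpow (by positivity), Real.log_rpow (by positivity), Real.log_rpow (by positivity)]
  exact h

lemma log_basic {a b c : ℕ} (ha : 3 ≤ a) (hab : a < b) (hbc : b < c) :
    0 < Real.log 2 ∧ Real.log 3 ≤ Real.log a ∧ Real.log a ≤ Real.log b ∧
      Real.log b ≤ Real.log c ∧ 2 * Real.log 2 ≤ Real.log b := by
  have ha' : (3 : ℝ) ≤ a := by exact_mod_cast ha
  have hab' : (a : ℝ) ≤ b := by exact_mod_cast hab.le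
  have hbc' : (b : ℝ) ≤ c := by exact_mod_cast hbc.le
  have hb4 : (2 : ℝ) ^ 2 ≤ b := by
    have : 2 ^ 2 ≤ b := by lia
    exact_mod_cast this
  refine ⟨Real.log_pos (by norm_num), Real.log_le_log (by norm_num) ha',
    Real.log_le_log (by linarith) hab', Real.log_le_log (by linarith) hbc', ?_⟩
  have := Real.log_le_log (by norm_num) hb4
  simpa [Real.log_pow] using this

lemma mul_le_lcm_pow {p k t : ℕ} (hp : p.Prime) (h : ¬ p ^ (k + 1) ∣ t) :
    p * t ≤ Nat.lcm (p ^ (k + 1)) t := by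
  obtain ⟨r, hr1, hr⟩ := (Nat.dvd_prime_pow hp).1 (Nat.gcd_dvd_left (p ^ (k + 1)) t)
  have hrk : r ≤ k := by
    by_contra hlt
    have : r = k + 1 := by lia
    subst this
    exact h (hr ▸ Nat.gcd_dvd_right _ _)
  have h1 : p ^ k * (p * t) ≤ p ^ k * Nat.lcm (p ^ (k + 1)) t := by
    calc p ^ k * (p * t) = p ^ (k + 1) * t := by ring
      _ = Nat.gcd (p ^ (k + 1)) t * Nat.lcm (p ^ (k + 1)) t := (Nat.gcd_mul_lcm _ _).symm
      _ ≤ p ^ k * Nat.lcm (p ^ (k + 1)) t := by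
        rw [hr]; exact Nat.mul_le_mul_right _ (Nat.pow_le_pow_right hp.pos hrk)
  exact Nat.le_of_mul_le_mul_left h1 (pow_pos hp.pos k)

lemma not_dvd_add_one_of_dvd {b c : ℕ} (hpb : b.Prime) (hb : 4 ≤ b) (hob : Odd b) (hoc : Odd c)
    (hbc : b < c) (hcb : c ∣ 1 + b + b ^ 2) : ¬ b ∣ c + 1 := by
  intro hbt
  obtain ⟨d, hd⟩ := hcb
  have h1 : b ∣ (c + 1) * d := hbt.mul_right d
  have h2 : (c + 1) * d = b * (1 + b) + (d + 1) := by linarith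
  rw [h2, Nat.dvd_add_right (dvd_mul_right _ _)] at h1
  have h3 : b ≤ d + 1 := Nat.le_of_dvd (by lia) h1
  have hc2 : b + 2 ≤ c := by
    grind
  obtain ⟨e, rfl⟩ : ∃ e, d = b - 1 + e := ⟨d + 1 - b, by lia⟩
  obtain ⟨b', rfl⟩ : ∃ b', b = b' + 1 := ⟨b - 1, by lia⟩
  obtain ⟨f, rfl⟩ : ∃ f, c = b' + 3 + f := ⟨c - (b' + 3), by lia⟩
  have hb' : 3 ≤ b' := by lia
  simp only [Nat.add_sub_cancel] at hd
  have he : e = 0 := by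
    by_contra h
    have : 1 ≤ e := by lia
    nlinarith [Nat.zero_le (f * b'), Nat.zero_le (f * e), Nat.zero_le (e * b')]
  have hf : f = 0 := by
    by_contra h
    have : 1 ≤ f := by lia
    subst he
    have : f * b' = 3 := by linarith
    have : f = 1 := by nlinarith
    have : b' = 3 := by nlinarith
    subst this
    exact absurd hpb (by norm_num)
  subst he hf
  linarith

lemma geom_sum_four_lt {a : ℕ} (ha : 3 ≤ a) :
    1 + a + a ^ 2 + a ^ 3 + a ^ 4 + 1 < 2 * a ^ 4 := by
  have h2 : 3 * a ≤ a ^ 2 := by rw [sq]; gcongr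
  have h3 : 3 * a ^ 2 ≤ a ^ 3 := by rw [pow_succ' a 2]; gcongr
  have h4 : 3 * a ^ 3 ≤ a ^ 4 := by rw [pow_succ' a 3]; gcongr
  lia

lemma lt_two_mul_pow_four {a b : ℕ} (ha : 3 ≤ a) (h : b ^ 2 ≤ 1 + a + a ^ 2 + a ^ 3 + a ^ 4) :
    1 + b + b ^ 2 + 1 < 2 * a ^ 4 := by
  have h2 : 3 * a ≤ a ^ 2 := by rw [sq]; gcongr
  have h3 : 3 * a ^ 2 ≤ a ^ 3 := by rw [pow_succ' a 2]; gcongr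
  have h4 : 3 * a ^ 3 ≤ a ^ 4 := by rw [pow_succ' a 3]; gcongr
  have hb : b < a ^ 2 + a := by
    by_contra! hb
    have h5 : (a ^ 2 + a) ^ 2 ≤ b ^ 2 := by gcongr
    have h6 : (a ^ 2 + a) ^ 2 = a ^ 4 + 2 * a ^ 3 + a ^ 2 := by ring
    lia
  lia

lemma logBound_of_dvd_sq {N a b c : ℕ} (hN : Odd N) (hpa : a.Prime) (hpb : b.Prime)
    (hpc : c.Prime) (ha : 3 ≤ a) (hab : a < b) (hbc : b < c) (hcN : c ∣ N) (hcN' : c + 1 ∣ 2 * N) (hbN : b ^ 2 ∣ N) (haN : a ^ 4 ∣ N)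
    (hc3 : c ^ 3 ≤ 6 * N) (hcb : c ∣ 1 + b + b ^ 2)
    (ha6 : a ^ 6 ∣ N ∨ 1 + a + a ^ 2 + a ^ 3 + a ^ 4 ∣ N) : LogBound N a b c := by
  have h0 := hN.pos
  have cab : a.Coprime b := (Nat.coprime_primes hpa hpb).2 hab.ne
  have cac : a.Coprime c := (Nat.coprime_primes hpa hpc).2 (hab.trans hbc).ne
  have cbc : b.Coprime c := (Nat.coprime_primes hpb hpc).2 hbc.ne
  obtain ⟨l0, l1, l2, l3, l4⟩ := log_basic ha hab hbc
  have l5 := three_mul_log_two_le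
  have l6 := five_mul_log_three_le
  have lc := log_monomial_le (i := 0) (j := 0) (k := 3) (m := 1) (n := 1)
    hpa.pos hpb.pos hpc.pos h0 (by linarith)
  obtain ⟨t, ht, htN, cct⟩ := add_one_div_two_dvd hN hcN hcN'
  have hbt : b.Coprime t := (Nat.Prime.coprime_iff_not_dvd hpb).2 fun h =>
    not_dvd_add_one_of_dvd hpb (by lia) (hN.of_dvd_nat ((dvd_pow_self b two_ne_zero).trans hbN))
      (hN.of_dvd_nat hcN) hbc hcb (ht ▸ h.mul_left 2)
  have hcbt : c * b ^ 2 * t ∣ N := mul_dvd_of_coprime₃ (cbc.symm.pow_right _) cct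
    (hbt.pow_left _) hcN hbN htN
  have n1 : c * b ^ 2 * (c + 1) ≤ 2 * N := by
    rw [ht]; linarith [Nat.le_of_dvd h0 hcbt]
  have m1 := log_monomial_le (i := 0) (j := 2) (k := 2) (m := 1) (n := 0)
    hpa.pos hpb.pos hpc.pos h0 (by nlinarith [Nat.zero_le (c * b ^ 2)])
  unfold LogBound
  rcases ha6 with ha6 | hS
  · have m2 := log_monomial_le (i := 6) (j := 2) (k := 1) (m := 0) (n := 0)
      hpa.pos hpb.pos hpc.pos h0 (by
        have := Nat.le_of_dvd h0 (mul_dvd_of_coprime₃ (cab.pow 6 2) (cac.pow 6 1)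
          (cbc.pow 2 1) ha6 hbN (by simpa using hcN))
        simpa using this)
    push_cast at *
    linarith
  have m2 := log_monomial_le (i := 4) (j := 2) (k := 1) (m := 0) (n := 0)
    hpa.pos hpb.pos hpc.pos h0 (by
      have := Nat.le_of_dvd h0 (mul_dvd_of_coprime₃ (cab.pow 4 2) (cac.pow 4 1)
        (cbc.pow 2 1) haN hbN (by simpa using hcN))
      simpa using this)
  by_cases hat : a ^ 4 ∣ t
  · have hat' : a ^ 4 ≤ t := Nat.le_of_dvd (by lia) hat
    set T := 1 + a + a ^ 2 + a ^ 3 + a ^ 4 with hT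
    have hcT : c.Coprime T := by
      rw [Nat.Prime.coprime_iff_not_dvd hpc]
      intro h
      have := Nat.le_of_dvd (by lia) h
      have := geom_sum_four_lt ha
      lia
    have haT : a.Coprime T := by
      have : T = 1 + a * (1 + a + a ^ 2 + a ^ 3) := by rw [hT]; ring
      rw [this]; simp
    have hbT : ¬ b ^ 2 ∣ T := by
      intro h
      have h1 : b ^ 2 ≤ T := Nat.le_of_dvd (by lia) h
      have h2 : c ≤ 1 + b + b ^ 2 := Nat.le_of_dvd (by lia) hcb
      have := lt_two_mul_pow_four ha h1
      lia
    obtain ⟨R, hRN, hbR, hTR⟩ : ∃ R, R ∣ T ∧ b.Coprime R ∧ T ≤ b * R := by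
      by_cases hb : b ∣ T
      · obtain ⟨R, hR⟩ := hb
        refine ⟨R, hR ▸ dvd_mul_left _ _, ?_, hR.le⟩
        rw [Nat.Prime.coprime_iff_not_dvd hpb]
        intro h
        exact hbT (by rw [hR, sq]; exact mul_dvd_mul_left b h)
      · exact ⟨T, dvd_rfl, (Nat.Prime.coprime_iff_not_dvd hpb).2 hb,
          Nat.le_mul_of_pos_left _ hpb.pos⟩
    have hdvd : (a ^ 4 * b ^ 2 * c ^ 1) * R ∣ N := by
      refine Nat.Coprime.mul_dvd_of_dvd_of_dvd ?_ (mul_dvd_of_coprime₃ (cab.pow 4 2) (cac.pow 4 1)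
        (cbc.pow 2 1) haN hbN (by simpa using hcN)) (hRN.trans hS)
      exact (((haT.coprime_dvd_right hRN).pow_left 4).mul_left (hbR.pow_left 2)).mul_left
        ((hcT.coprime_dvd_right hRN).pow_left 1)
    have m3 := log_monomial_le (i := 8) (j := 1) (k := 1) (m := 0) (n := 0)
      hpa.pos hpb.pos hpc.pos h0 (by
        calc a ^ 8 * b ^ 1 * c ^ 1 = a ^ 4 * b * c * a ^ 4 := by ring
          _ ≤ a ^ 4 * b * c * (b * R) := by gcongr; exact le_trans (by lia) hTR
          _ = (a ^ 4 * b ^ 2 * c ^ 1) * R := by ring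
          _ ≤ N := Nat.le_of_dvd h0 hdvd
          _ = 2 ^ 0 * 3 ^ 0 * N := by ring)
    push_cast at *
    linarith
  · have hlcm : c * b ^ 2 * Nat.lcm (a ^ 4) t ∣ N := by
      refine mul_dvd_of_coprime₃ (cbc.symm.pow_right _) ?_ ?_ hcN hbN (Nat.lcm_dvd haN htN)
      · exact Nat.Coprime.coprime_dvd_right (Nat.lcm_dvd_mul _ _)
          ((cac.symm.pow_right 4).mul_right cct)
      · exact Nat.Coprime.coprime_dvd_right (Nat.lcm_dvd_mul _ _)
          (((cab.symm.pow_right 4).mul_right hbt).pow_left 2)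
    have hlt : a * t ≤ Nat.lcm (a ^ 4) t := mul_le_lcm_pow hpa hat
    have m3 := log_monomial_le (i := 1) (j := 2) (k := 2) (m := 1) (n := 0)
      hpa.pos hpb.pos hpc.pos h0 (by
        calc a ^ 1 * b ^ 2 * c ^ 2 = c * b ^ 2 * (a * c) := by ring
          _ ≤ c * b ^ 2 * (a * (2 * t)) := by gcongr; lia
          _ = 2 * (c * b ^ 2 * (a * t)) := by ring
          _ ≤ 2 * (c * b ^ 2 * Nat.lcm (a ^ 4) t) := by gcongr
          _ ≤ 2 * N := by gcongr; exact Nat.le_of_dvd h0 hlcm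
          _ = 2 ^ 1 * 3 ^ 0 * N := by ring)
    push_cast at *
    linarith

lemma log_add_le_of_mul_le {a c i m n : ℕ} (ha : 0 < a) (hc : 0 < c)
    (h : 2 ^ m * c ≤ 3 ^ n * a ^ i) :
    m * Real.log 2 + Real.log c ≤ n * Real.log 3 + i * Real.log a := by
  have h' : (2 : ℝ) ^ m * c ≤ 3 ^ n * a ^ i := by exact_mod_cast h
  have h'' := Real.log_le_log (by positivity) h'
  rwa [Real.log_mul (by positivity) (by positivity), Real.log_mul (by positivity) (by positivity),
    Real.log_pow, Real.log_pow, Real.log_pow] at h''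

lemma pow_four_le_of_sq_dvd {N p : ℕ} (hN : 0 < N) (h : p ^ 2 ∣ N) (h' : 1 + p + p ^ 2 ∣ N) :
    p ^ 4 ≤ N := by
  have hp : p.Coprime (1 + p + p ^ 2) := by
    have : 1 + p + p ^ 2 = 1 + p * (1 + p) := by ring
    rw [this]; simp
  calc p ^ 4 = p ^ 2 * p ^ 2 := by ring
    _ ≤ p ^ 2 * (1 + p + p ^ 2) := by gcongr; lia
    _ ≤ N := Nat.le_of_dvd hN ((hp.pow_left 2).mul_dvd_of_dvd_of_dvd h h')

lemma four_mul_le_of_dvd_add_one {a c : ℕ} (ha : 3 ≤ a) (hac : a ∣ c + 1)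
    (hca : c ∣ 1 + a + a ^ 2 + a ^ 3 + a ^ 4) : 4 * c ≤ 9 * a ^ 3 := by
  obtain ⟨d, hd⟩ := hca
  have h1 : a ∣ (c + 1) * d := hac.mul_right d
  have h2 : (c + 1) * d = a * (1 + a + a ^ 2 + a ^ 3) + (d + 1) := by linarith
  rw [h2, Nat.dvd_add_right (dvd_mul_right _ _)] at h1
  have h3 : a ≤ d + 1 := Nat.le_of_dvd (by lia) h1
  obtain ⟨e, rfl⟩ : ∃ e, a = e + 1 := ⟨a - 1, by lia⟩
  have h4 : c * e ≤ 1 + (e + 1) + (e + 1) ^ 2 + (e + 1) ^ 3 + (e + 1) ^ 4 := by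
    rw [hd]; gcongr; lia
  have h5 : c * e * e ≤ (e + 1) ^ 5 := by
    calc c * e * e ≤ (1 + (e + 1) + (e + 1) ^ 2 + (e + 1) ^ 3 + (e + 1) ^ 4) * e := by gcongr
      _ ≤ (e + 1) ^ 5 := by ring_nf; lia
  have h6 : 4 * (e + 1) ^ 2 ≤ 9 * (e * e) := by nlinarith
  have h7 : (e + 1) ^ 2 * (4 * c) ≤ (e + 1) ^ 2 * (9 * (e + 1) ^ 3) := by
    calc (e + 1) ^ 2 * (4 * c) = c * (4 * (e + 1) ^ 2) := by ring
      _ ≤ c * (9 * (e * e)) := by gcongr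
      _ = 9 * (c * e * e) := by ring
      _ ≤ 9 * (e + 1) ^ 5 := by gcongr
      _ = (e + 1) ^ 2 * (9 * (e + 1) ^ 3) := by ring
  exact Nat.le_of_mul_le_mul_left h7 (by positivity)

lemma logBound_of_dvd_geom_sum_four {N a b c : ℕ} (hN : Odd N) (hpa : a.Prime) (hpb : b.Prime)
    (hpc : c.Prime) (ha : 3 ≤ a) (hab : a < b) (hbc : b < c) (hcN : c ∣ N)
    (hcN' : c + 1 ∣ 2 * N) (hbN : b ^ 2 ∣ N) (haN : a ^ 4 ∣ N) (hc3 : c ^ 3 ≤ 6 * N)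
    (hca : c ∣ 1 + a + a ^ 2 + a ^ 3 + a ^ 4) (hBN : 1 + b + b ^ 2 ∣ N) : LogBound N a b c := by
  have h0 := hN.pos
  have cab : a.Coprime b := (Nat.coprime_primes hpa hpb).2 hab.ne
  have cac : a.Coprime c := (Nat.coprime_primes hpa hpc).2 (hab.trans hbc).ne
  have cbc : b.Coprime c := (Nat.coprime_primes hpb hpc).2 hbc.ne
  obtain ⟨l0, l1, l2, l3, l4⟩ := log_basic ha hab hbc
  have l5 := three_mul_log_two_le
  have l6 := five_mul_log_three_le
  have lc := log_monomial_le (i := 0) (j := 0) (k := 3) (m := 1) (n := 1)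
    hpa.pos hpb.pos hpc.pos h0 (by linarith)
  have lN := log_monomial_le (i := 4) (j := 2) (k := 1) (m := 0) (n := 0)
    hpa.pos hpb.pos hpc.pos h0 (by
      have := Nat.le_of_dvd h0 (mul_dvd_of_coprime₃ (cab.pow 4 2) (cac.pow 4 1)
        (cbc.pow 2 1) haN hbN (by simpa using hcN))
      simpa using this)
  have hbB : b.Coprime (1 + b + b ^ 2) := by
    have : 1 + b + b ^ 2 = 1 + b * (1 + b) := by ring
    rw [this]; simp
  have lb := log_monomial_le (i := 0) (j := 4) (k := 0) (m := 0) (n := 0)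
    hpa.pos hpb.pos hpc.pos h0 (by simpa using pow_four_le_of_sq_dvd h0 hbN hBN)
  obtain ⟨t, ht, htN, cct⟩ := add_one_div_two_dvd hN hcN hcN'
  unfold LogBound
  by_cases hac : a ∣ c + 1
  · have m1 := log_add_le_of_mul_le (i := 3) (m := 2) (n := 2) hpa.pos hpc.pos
      (by simpa using four_mul_le_of_dvd_add_one ha hac hca)
    push_cast at *
    linarith
  have cat : a.Coprime t := (Nat.Prime.coprime_iff_not_dvd hpa).2 fun h =>
    hac (ht ▸ h.mul_left 2)
  have hcT : c ≤ 1 + a + a ^ 2 + a ^ 3 + a ^ 4 := Nat.le_of_dvd (by lia) hca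
  by_cases hbt : b ^ 2 ∣ t
  · have hbt' : b ^ 2 ≤ t := Nat.le_of_dvd (by lia) hbt
    have hcat : c * a ^ 4 * t ∣ N :=
      mul_dvd_of_coprime₃ (cac.symm.pow_right 4) cct (cat.pow_left 4) hcN haN htN
    have m1 := log_monomial_le (i := 4) (j := 0) (k := 2) (m := 1) (n := 0)
      hpa.pos hpb.pos hpc.pos h0 (by
        calc a ^ 4 * b ^ 0 * c ^ 2 = c * a ^ 4 * c := by ring
          _ ≤ c * a ^ 4 * (2 * t) := by gcongr; lia
          _ = 2 * (c * a ^ 4 * t) := by ring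
          _ ≤ 2 * N := by gcongr; exact Nat.le_of_dvd h0 hcat
          _ = 2 ^ 1 * 3 ^ 0 * N := by ring)
    have haB : ¬ a ^ 4 ∣ 1 + b + b ^ 2 := by
      intro h
      have h1 := Nat.le_of_dvd (by lia) h
      have h2 := geom_sum_four_lt ha
      have h3 : b < a ^ 2 := lt_of_pow_lt_pow_left₀ 2 (by positivity) (by rw [← pow_mul]; lia)
      nlinarith
    have ccB : c.Coprime (1 + b + b ^ 2) := by
      rw [Nat.Prime.coprime_iff_not_dvd hpc]
      intro h
      have := Nat.le_of_dvd (by lia) h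
      nlinarith
    have hlcm : c * b ^ 2 * Nat.lcm (a ^ 4) (1 + b + b ^ 2) ∣ N := by
      refine mul_dvd_of_coprime₃ (cbc.symm.pow_right _) ?_ ?_ hcN hbN (Nat.lcm_dvd haN hBN)
      · exact Nat.Coprime.coprime_dvd_right (Nat.lcm_dvd_mul _ _)
          ((cac.symm.pow_right 4).mul_right ccB)
      · exact Nat.Coprime.coprime_dvd_right (Nat.lcm_dvd_mul _ _)
          (((cab.symm.pow_right 4).mul_right hbB).pow_left 2)
    have m2 := log_monomial_le (i := 1) (j := 4) (k := 1) (m := 0) (n := 0)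
      hpa.pos hpb.pos hpc.pos h0 (by
        calc a ^ 1 * b ^ 4 * c ^ 1 = c * b ^ 2 * (a * b ^ 2) := by ring
          _ ≤ c * b ^ 2 * (a * (1 + b + b ^ 2)) := by gcongr; lia
          _ ≤ c * b ^ 2 * Nat.lcm (a ^ 4) (1 + b + b ^ 2) := by
            gcongr; exact mul_le_lcm_pow hpa haB
          _ ≤ N := Nat.le_of_dvd h0 hlcm
          _ = 2 ^ 0 * 3 ^ 0 * N := by ring)
    push_cast at *
    linarith
  · have hlcm : c * a ^ 4 * Nat.lcm (b ^ 2) t ∣ N := by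
      refine mul_dvd_of_coprime₃ (cac.symm.pow_right _) ?_ ?_ hcN haN (Nat.lcm_dvd hbN htN)
      · exact Nat.Coprime.coprime_dvd_right (Nat.lcm_dvd_mul _ _)
          ((cbc.symm.pow_right 2).mul_right cct)
      · exact Nat.Coprime.coprime_dvd_right (Nat.lcm_dvd_mul _ _)
          (((cab.pow_right 2).mul_right cat).pow_left 4)
    have m1 := log_monomial_le (i := 4) (j := 1) (k := 2) (m := 1) (n := 0)
      hpa.pos hpb.pos hpc.pos h0 (by
        calc a ^ 4 * b ^ 1 * c ^ 2 = c * a ^ 4 * (b * c) := by ring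
          _ ≤ c * a ^ 4 * (b * (2 * t)) := by gcongr; lia
          _ = 2 * (c * a ^ 4 * (b * t)) := by ring
          _ ≤ 2 * (c * a ^ 4 * Nat.lcm (b ^ 2) t) := by gcongr; exact mul_le_lcm_pow hpb hbt
          _ ≤ 2 * N := by gcongr; exact Nat.le_of_dvd h0 hlcm
          _ = 2 ^ 1 * 3 ^ 0 * N := by ring)
    have m2 := log_add_le_of_mul_le (i := 4) (m := 1) (n := 1) hpa.pos hpc.pos (by
      have := two_mul_geom_sum_le ha 4
      simp [sum_range_succ] at this
      lia)
    push_cast at *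
    linarith

/-- The case where the largest prime divisor occurs to the first power and the second largest
occurs to the second power. -/
lemma Nat.Perfect.logBound_of_factorization {N a b c : ℕ} (h : Nat.Perfect N) (hN : Odd N)
    (ha : a ∈ N.primeFactors) (hb : b ∈ N.primeFactors) (hc : c ∈ N.primeFactors)
    (hab : a < b) (hbc : b < c) (hfa : 4 ≤ N.factorization a) (hfb : N.factorization b = 2)
    (hfc : N.factorization c = 1) (hcube : c ^ 3 ≤ 6 * N) : LogBound N a b c := by
  have h0 := hN.pos
  have hpa := Nat.prime_of_mem_primeFactors ha
  have hpb := Nat.prime_of_mem_primeFactors hb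
  have hpc := Nat.prime_of_mem_primeFactors hc
  have hcN := Nat.dvd_of_mem_primeFactors hc
  have ha3 : 3 ≤ a := by
    have := hN.of_dvd_nat (Nat.dvd_of_mem_primeFactors ha)
    have := hpa.two_le
    grind
  have hcN' : c + 1 ∣ 2 * N := by
    have := h.geom_sum_dvd hc
    rw [hfc] at this
    simpa [sum_range_succ, add_comm] using this
  have hbN : b ^ 2 ∣ N := hfb ▸ Nat.ordProj_dvd N b
  have hafN := Nat.ordProj_dvd N a
  have haN : a ^ 4 ∣ N := (pow_dvd_pow a hfa).trans hafN
  have hea : Even (N.factorization a) :=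
    h.even_factorization hN ha hc (hab.trans hbc).ne (by simp [hfc])
  have hBN : 1 + b + b ^ 2 ∣ N := by
    have := h.geom_sum_dvd_of_even hN hb (by simp [hfb])
    rw [hfb] at this
    simpa [sum_range_succ] using this
  have ha6 : N.factorization a = 4 ∨ 6 ≤ N.factorization a := by
    obtain ⟨r, hr⟩ := hea
    lia
  have cab : a.Coprime b := (Nat.coprime_primes hpa hpb).2 hab.ne
  have cac : a.Coprime c := (Nat.coprime_primes hpa hpc).2 (hab.trans hbc).ne
  have cbc : b.Coprime c := (Nat.coprime_primes hpb hpc).2 hbc.ne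
  obtain ⟨l0, l1, l2, l3, l4⟩ := log_basic ha3 hab hbc
  have l5 := three_mul_log_two_le
  have l6 := five_mul_log_three_le
  have lc := log_monomial_le (i := 0) (j := 0) (k := 3) (m := 1) (n := 1)
    hpa.pos hpb.pos hpc.pos h0 (by linarith)
  have hdvd {x : ℕ} (hx : x ≤ N.factorization a) : a ^ x * b ^ 2 * c ^ 1 ∣ N :=
    mul_dvd_of_coprime₃ (cab.pow x 2) (cac.pow x 1) (cbc.pow 2 1)
      ((pow_dvd_pow a hx).trans hafN) hbN (by simpa using hcN)
  obtain ⟨p, hp, hcp⟩ := h.exists_dvd_geom_sum hc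
  have hpp := Nat.prime_of_mem_primeFactors hp
  have hp3 : 3 ≤ p := by
    have := hN.of_dvd_nat (Nat.dvd_of_mem_primeFactors hp)
    have := hpp.two_le
    grind
  have hcp' : 2 * c ≤ 3 * p ^ N.factorization p := by
    refine le_trans ?_ (two_mul_geom_sum_le hp3 _)
    gcongr
    exact Nat.le_of_dvd (sum_pos (fun i _ => pow_pos hpp.pos i) (by simp)) hcp
  rcases eq_or_ne p c with rfl | hpc'
  · rw [hfc] at hcp
    simp [sum_range_succ] at hcp
    exact absurd hcp hpp.ne_one
  rcases eq_or_ne p b with rfl | hpb'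
  · rw [hfb] at hcp
    refine logBound_of_dvd_sq hN hpa hpb hpc ha3 hab hbc hcN hcN' hbN haN hcube
      (by simpa [sum_range_succ] using hcp) (ha6.symm.imp (fun h6 => ?_) (fun h4 => ?_))
    · exact (pow_dvd_pow a h6).trans hafN
    · have := h.geom_sum_dvd_of_even hN ha hea
      rw [h4] at this
      simpa [sum_range_succ] using this
  rcases eq_or_ne p a with rfl | hpa'
  · rcases ha6 with h4 | h6
    · rw [h4] at hcp
      exact logBound_of_dvd_geom_sum_four hN hpa hpb hpc ha3 hab hbc hcN hcN' hbN haN hcube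
        (by simpa [sum_range_succ] using hcp) hBN
    · have m1 := log_monomial_le (i := 6) (j := 2) (k := 1) (m := 0) (n := 0)
        hpa.pos hpb.pos hpc.pos h0 (by simpa using Nat.le_of_dvd h0 (hdvd h6))
      have m2 := log_monomial_le (i := 0) (j := 2) (k := 2) (m := 0) (n := 1)
        hpa.pos hpb.pos hpc.pos h0 (by
          calc p ^ 0 * b ^ 2 * c ^ 2 = b ^ 2 * c * c := by ring
            _ ≤ b ^ 2 * c * (3 * p ^ N.factorization p) := by gcongr; lia
            _ = 3 * (p ^ N.factorization p * b ^ 2 * c ^ 1) := by ring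
            _ ≤ 3 * N := by gcongr; exact Nat.le_of_dvd h0 (hdvd le_rfl)
            _ = 2 ^ 0 * 3 ^ 1 * N := by ring)
      unfold LogBound
      push_cast at *
      linarith
  · have hdvd' : a ^ 4 * b ^ 2 * c ^ 1 * p ^ N.factorization p ∣ N := by
      refine Nat.Coprime.mul_dvd_of_dvd_of_dvd (Nat.Coprime.pow_right _ ?_) (hdvd hfa)
        (Nat.ordProj_dvd N p)
      have h1 : a.Coprime p := (Nat.coprime_primes hpa hpp).2 hpa'.symm
      have h2 : b.Coprime p := (Nat.coprime_primes hpb hpp).2 hpb'.symm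
      have h3 : c.Coprime p := (Nat.coprime_primes hpc hpp).2 hpc'.symm
      exact ((h1.pow_left 4).mul_left (h2.pow_left 2)).mul_left (h3.pow_left 1)
    have lN := log_monomial_le (i := 4) (j := 2) (k := 1) (m := 0) (n := 0)
      hpa.pos hpb.pos hpc.pos h0 (by simpa using Nat.le_of_dvd h0 (hdvd hfa))
    have lb := log_monomial_le (i := 0) (j := 4) (k := 0) (m := 0) (n := 0)
      hpa.pos hpb.pos hpc.pos h0 (by simpa using pow_four_le_of_sq_dvd h0 hbN hBN)
    have m1 := log_monomial_le (i := 4) (j := 2) (k := 2) (m := 0) (n := 1)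
      hpa.pos hpb.pos hpc.pos h0 (by
        calc a ^ 4 * b ^ 2 * c ^ 2 = a ^ 4 * b ^ 2 * c * c := by ring
          _ ≤ a ^ 4 * b ^ 2 * c * (3 * p ^ N.factorization p) := by gcongr; lia
          _ = 3 * (a ^ 4 * b ^ 2 * c ^ 1 * p ^ N.factorization p) := by ring
          _ ≤ 3 * N := by gcongr; exact Nat.le_of_dvd h0 hdvd'
          _ = 2 ^ 0 * 3 ^ 1 * N := by ring)
    unfold LogBound
    push_cast at *
    linarith

/-- The bound in logarithmic form, in terms of the exponents of three prime divisors. -/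
lemma Nat.Perfect.logBound {N a b c : ℕ} (h : Nat.Perfect N) (hN : Odd N)
    (ha : a ∈ N.primeFactors) (hb : b ∈ N.primeFactors) (hc : c ∈ N.primeFactors)
    (hab : a < b) (hbc : b < c)
    (h4 : 4 ≤ N.factorization a ∨ 4 ≤ N.factorization b ∨ 4 ≤ N.factorization c) :
    LogBound N a b c := by
  have h0 := hN.pos
  have hpa := Nat.prime_of_mem_primeFactors ha
  have hpb := Nat.prime_of_mem_primeFactors hb
  have hpc := Nat.prime_of_mem_primeFactors hc
  have ha3 : 3 ≤ a := by
    have := hN.of_dvd_nat (Nat.dvd_of_mem_primeFactors ha)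
    have := hpa.two_le
    grind
  have cab : a.Coprime b := (Nat.coprime_primes hpa hpb).2 hab.ne
  have cac : a.Coprime c := (Nat.coprime_primes hpa hpc).2 (hab.trans hbc).ne
  have cbc : b.Coprime c := (Nat.coprime_primes hpb hpc).2 hbc.ne
  obtain ⟨l0, l1, l2, l3, l4⟩ := log_basic ha3 hab hbc
  have l5 := three_mul_log_two_le
  have l6 := five_mul_log_three_le
  have hlog {i j k : ℕ} (hi : i ≤ N.factorization a) (hj : j ≤ N.factorization b)
      (hk : k ≤ N.factorization c) :
      i * Real.log a + j * Real.log b + k * Real.log c ≤ Real.log N := by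
    have hle : a ^ i * b ^ j * c ^ k ≤ 2 ^ 0 * 3 ^ 0 * N := by
      simpa using Nat.le_of_dvd h0 (mul_dvd_of_coprime₃ (cab.pow i j) (cac.pow i k) (cbc.pow j k)
        ((pow_dvd_pow a hi).trans (Nat.ordProj_dvd N a))
        ((pow_dvd_pow b hj).trans (Nat.ordProj_dvd N b))
        ((pow_dvd_pow c hk).trans (Nat.ordProj_dvd N c)))
    simpa using log_monomial_le hpa.pos hpb.pos hpc.pos h0 hle
  have hfa := hpa.factorization_pos_of_dvd h0.ne' (Nat.dvd_of_mem_primeFactors ha)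
  have hfb := hpb.factorization_pos_of_dvd h0.ne' (Nat.dvd_of_mem_primeFactors hb)
  have hfc := hpc.factorization_pos_of_dvd h0.ne' (Nat.dvd_of_mem_primeFactors hc)
  have hc4 (hec : Even (N.factorization c)) : 4 * Real.log c ≤ Real.log N := by
    have hle : c ^ 4 ≤ N := by
      obtain h2 | h4 : N.factorization c = 2 ∨ 4 ≤ N.factorization c := by
        obtain ⟨r, hr⟩ := hec
        lia
      · have hS := h.geom_sum_dvd_of_even hN hc hec
        rw [h2] at hS
        exact pow_four_le_of_sq_dvd h0 (h2 ▸ Nat.ordProj_dvd N c)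
          (by simpa [sum_range_succ] using hS)
      · exact Nat.le_of_dvd h0 ((pow_dvd_pow c h4).trans (Nat.ordProj_dvd N c))
    simpa using log_monomial_le (i := 0) (j := 0) (k := 4) (m := 0) (n := 0)
      hpa.pos hpb.pos hpc.pos h0 (by simpa using hle)
  have even_of {p q : ℕ} (hp : p ∈ N.primeFactors) (hq : q ∈ N.primeFactors) (hpq : p ≠ q)
      (h1 : N.factorization q = 1) : Even (N.factorization p) :=
    h.even_factorization hN hp hq hpq (by simp [h1])
  by_cases hc1 : N.factorization c = 1
  · have hcube : c ^ 3 ≤ 6 * N := by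
      obtain ⟨p, hp, hcp⟩ := h.exists_dvd_geom_sum hc
      have hpp := Nat.prime_of_mem_primeFactors hp
      have hpc' : p ≠ c := by
        rintro rfl
        rw [hc1] at hcp
        simp [sum_range_succ] at hcp
        exact absurd hcp hpp.ne_one
      refine cube_le_six_mul hN hpp hpc hpc' (Nat.dvd_of_mem_primeFactors hp)
        (Nat.dvd_of_mem_primeFactors hc) ?_ hcp
      have := h.geom_sum_dvd hc
      rw [hc1] at this
      simpa [sum_range_succ, add_comm] using this
    have lc := log_monomial_le (i := 0) (j := 0) (k := 3) (m := 1) (n := 1)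
      hpa.pos hpb.pos hpc.pos h0 (by linarith)
    obtain ⟨r, hr⟩ := even_of ha hc (hab.trans hbc).ne hc1
    obtain ⟨s, hs⟩ := even_of hb hc hbc.ne hc1
    by_cases hb2 : N.factorization b = 2
    · exact h.logBound_of_factorization hN ha hb hc hab hbc (by lia) hb2 hc1 hcube
    · have m1 := hlog (i := 2) (j := 4) (k := 1) (by lia) (by lia) hfc
      unfold LogBound
      by_cases ha4 : 4 ≤ N.factorization a
      · have m2 := hlog (i := 4) (j := 4) (k := 1) ha4 (by lia) hfc
        push_cast at *
        linarith
      · push_cast at *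
        linarith
  unfold LogBound
  by_cases hb1 : N.factorization b = 1
  · have hea := even_of ha hb hab.ne hb1
    have hec := even_of hc hb hbc.ne' hb1
    have m0 := hc4 hec
    obtain ⟨r, hr⟩ := hea
    by_cases hc4' : 4 ≤ N.factorization c
    · have m1 := hlog (i := 2) (j := 1) (k := 4) (by lia) hfb hc4'
      push_cast at *
      linarith
    · have m1 := hlog (i := 4) (j := 1) (k := 2) (by lia) hfb (by lia)
      push_cast at *
      linarith
  by_cases ha1 : N.factorization a = 1
  · have hec := even_of hc ha (hab.trans hbc).ne' ha1
    have m0 := hc4 hec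
    by_cases hc4' : 4 ≤ N.factorization c
    · have m1 := hlog (i := 1) (j := 2) (k := 4) hfa (by lia) hc4'
      push_cast at *
      linarith
    · have m1 := hlog (i := 1) (j := 4) (k := 2) hfa (by lia) (by lia)
      push_cast at *
      linarith
  have m1 := hlog (i := 2) (j := 2) (k := 2) (by lia) (by lia) (by lia)
  push_cast at *
  linarith



/-- Let N be an odd perfect number with at least three distinct
prime divisors, with c, b, a its largest, second largest and third largest
prime divisors. If p⁴ ∣ N for some prime p ∈ {a, b, c}, then
abc < 2^(7/20) · 3^(13/60) · N^(17/30). -/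
theorem stmt_13 (N : ℕ) (hodd : Odd N) (hperf : Nat.Perfect N)
    (hk : 3 ≤ N.primeFactors.card)
    (a b c : ℕ)
    (ha : a ∈ N.primeFactors) (hb : b ∈ N.primeFactors) (hc : c ∈ N.primeFactors)
    (ha2 : (N.primeFactors.filter (fun q => a < q)).card = 2)
    (hb1 : (N.primeFactors.filter (fun q => b < q)).card = 1)
    (hc0 : (N.primeFactors.filter (fun q => c < q)).card = 0)
    (h4 : a ^ 4 ∣ N ∨ b ^ 4 ∣ N ∨ c ^ 4 ∣ N) :
    (a * b * c : ℝ) < (2 : ℝ) ^ ((7 : ℝ) / 20) * (3 : ℝ) ^ ((13 : ℝ) / 60) *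
      (N : ℝ) ^ ((17 : ℝ) / 30) := by
  have hab : a < b := by
    by_contra! hba
    have := card_le_card (monotone_filter_right N.primeFactors
      (p := fun q => a < q) (q := fun q => b < q) fun q _ hq => hba.trans_lt hq)
    lia
  have hbc : b < c := by
    by_contra! hcb
    have := card_le_card (monotone_filter_right N.primeFactors
      (p := fun q => b < q) (q := fun q => c < q) fun q _ hq => hcb.trans_lt hq)
    lia
  have hpa := Nat.prime_of_mem_primeFactors ha
  have hpb := Nat.prime_of_mem_primeFactors hb
  have hpc := Nat.prime_of_mem_primeFactors hc
  have h0 := hodd.pos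
  rw [hpa.pow_dvd_iff_le_factorization h0.ne', hpb.pow_dvd_iff_le_factorization h0.ne',
    hpc.pow_dvd_iff_le_factorization h0.ne'] at h4
  exact (hperf.logBound hodd ha hb hc hab hbc h4).mul_lt hpa.pos hpb.pos hpc.pos h0
end
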